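/- Analytic continuation is stable on S_h: if f_n ∈ S_h, f ∈ S_h, and f_n → f in L²(0,1), then f_n → f uniformly on every compact subset of ℍ_h. -/

import Mathlib

/-!
The proof is a normal-family argument whose compactness input is an a priori bound on the
representing data.

Write `f = ρ + ∫ dσ(λ)/(λ - (ω+ih)²)` and let `M = ρ + ∫ dσ(λ)/(λ+1)` be its mass.

* On a compact `K ⊆ ℍ_h` one has `λ + 1 ≤ A |λ - (ω+ih)²|` for all `λ ≥ 0` (`exists_kerBd`), so `f`
  and its modulus of continuity on `K` are controlled by `M` (`MemS.exists_mass`).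
* For real `0 < x < h/2` the real part of the kernel is at least `c/(λ+1)` (`exists_re_lower`).
  Since `ρ ≥ 0` and `σ ≥ 0` nothing cancels, so `Re f(x) ≥ c M` there, and `M` is bounded by the
  `L²(0,1)` norm of `f` (`mass_sq_le`, `exists_mass_bound`).

A sequence converging in `L²(0,1)` therefore has bounded masses, and it is pointwise bounded and
equicontinuous on `ℍ_h`. Along any ultrafilter finer than `atTop` it converges pointwise, hence
uniformly on compact sets, to a holomorphic limit `G`. The `L²` convergence forces `G = f` on
`(0,1)`, and so `G = f` on `ℍ_h` by the identity theorem. All ultrafilter limits being `f`, the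
sequence itself converges pointwise to `f`, and equicontinuity makes this uniform on compact sets.
-/

open MeasureTheory Complex Filter Set Topology Asymptotics

noncomputable section

/-- The open half-plane `ℍ_h = {ω : ℂ | Im ω > -h}`. -/
def Hh (h : ℝ) : Set ℂ := {ω : ℂ | -h < ω.im}

/-- The Stieltjes-type integral `∫₀^∞ dσ(λ)/(λ - (ω+ih)²)`. -/
def sInt (h : ℝ) (σ : Measure ℝ) (ω : ℂ) : ℂ :=
  ∫ l in Ici (0:ℝ), ((l : ℂ) - (ω + I * (h:ℂ)) ^ 2)⁻¹ ∂σ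

/-- Finiteness condition `∫₀^∞ dσ(λ)/(λ+1) < ∞`. -/
def FinCond (σ : Measure ℝ) : Prop :=
  (∫⁻ l in Ici (0:ℝ), ENNReal.ofReal (1 / (l + 1)) ∂σ) < ⊤

/-- `‖σ‖_* = ∫₀^∞ dσ(λ)/(λ+1)`. -/
def starNorm (σ : Measure ℝ) : ℝ :=
  (∫⁻ l in Ici (0:ℝ), ENNReal.ofReal (1 / (l + 1)) ∂σ).toReal

/-- Membership in the class `S_h`: `f(ω) = ρ + ∫₀^∞ dσ(λ)/(λ - (ω+ih)²)` on `ℍ_h`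
with `ρ ≥ 0` and `σ` a positive measure with `∫₀^∞ dσ(λ)/(λ+1) < ∞`. -/
def MemS (h : ℝ) (f : ℂ → ℂ) : Prop :=
  ∃ (ρ : ℝ) (σ : Measure ℝ), 0 ≤ ρ ∧ FinCond σ ∧
    ∀ ω ∈ Hh h, f ω = (ρ : ℂ) + sInt h σ ω

/-- `L²(0,1)` norm of (the restriction to `(0,1)` of) `f`. -/
def L2norm01 (f : ℂ → ℂ) : ℝ := Real.sqrt (∫ x in Ioo (0:ℝ) 1, ‖f (x:ℂ)‖ ^ 2)

/-! ### Bounds on the kernel -/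

/-- The kernel bound `λ + 1 ≤ A |λ - (ω+ih)²|` for all `λ ≥ 0`. -/
def KerBd (h A : ℝ) (ω : ℂ) : Prop :=
  ∀ l : ℝ, 0 ≤ l → l + 1 ≤ A * ‖(l : ℂ) - (ω + I * (h:ℂ)) ^ 2‖

/-- Factor `λ - w² = (√λ - w)(√λ + w)`; both factors have modulus at least `Im w`. -/
lemma sq_im_le_norm (w : ℂ) (hw : 0 < w.im) {l : ℝ} (hl : 0 ≤ l) :
    w.im ^ 2 ≤ ‖(l : ℂ) - w ^ 2‖ := by
  have e : (l : ℂ) - w ^ 2 = ((Real.sqrt l : ℝ) - w) * ((Real.sqrt l : ℝ) + w) := by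
    have : ((Real.sqrt l : ℝ) : ℂ) ^ 2 = (l : ℂ) := by
      rw [← ofReal_pow, Real.sq_sqrt hl]
    linear_combination -this
  rw [e, norm_mul, sq]
  have h1 : w.im ≤ ‖((Real.sqrt l : ℝ) : ℂ) - w‖ := by
    have := Complex.abs_im_le_norm (((Real.sqrt l : ℝ) : ℂ) - w)
    simp only [sub_im, ofReal_im, zero_sub, abs_neg, abs_of_pos hw] at this
    exact this
  have h2 : w.im ≤ ‖((Real.sqrt l : ℝ) : ℂ) + w‖ := by
    have := Complex.abs_im_le_norm (((Real.sqrt l : ℝ) : ℂ) + w)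
    simp only [add_im, ofReal_im, zero_add, abs_of_pos hw] at this
    exact this
  exact mul_le_mul h1 h2 hw.le (norm_nonneg _)

lemma im_shift (h : ℝ) (ω : ℂ) : (ω + I * (h:ℂ)).im = ω.im + h := by simp

lemma exists_kerBd (h : ℝ) {K : Set ℂ} (hK : IsCompact K) (hKs : K ⊆ Hh h) :
    ∃ A : ℝ, 0 < A ∧ ∀ ω ∈ K, KerBd h A ω := by
  rcases K.eq_empty_or_nonempty with rfl | hne
  · exact ⟨1, one_pos, by simp⟩
  obtain ⟨ω₀, hω₀, hmin⟩ := hK.exists_isMinOn hne Complex.continuous_im.continuousOn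
  obtain ⟨ω₁, hω₁, hmax⟩ := hK.exists_isMaxOn hne
    (f := fun ω : ℂ => ‖ω + I * (h:ℂ)‖) (by fun_prop)
  set δ := ω₀.im + h
  set R := ‖ω₁ + I * (h:ℂ)‖
  have hδ : 0 < δ := by have := hKs hω₀; simp only [Hh, mem_ofPred_eq] at this; simp only [δ]; linarith
  have hpos : 0 < (R ^ 2 + 1) / δ ^ 2 := by positivity
  refine ⟨1 + (R ^ 2 + 1) / δ ^ 2, by linarith, fun ω hω l hl => ?_⟩
  have h1 : δ ≤ (ω + I * (h:ℂ)).im := by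
    rw [im_shift]; have := hmin hω; simp only [mem_ofPred_eq] at this; simp only [δ]; linarith
  have h2 : ‖ω + I * (h:ℂ)‖ ≤ R := hmax hω
  set w := ω + I * (h:ℂ)
  have h3 : δ ^ 2 ≤ ‖(l : ℂ) - w ^ 2‖ :=
    (pow_le_pow_left₀ hδ.le h1 2).trans (sq_im_le_norm w (hδ.trans_le h1) hl)
  have h4 : l - R ^ 2 ≤ ‖(l : ℂ) - w ^ 2‖ := by
    have a := norm_sub_norm_le (l : ℂ) (w ^ 2)
    rw [norm_real, Real.norm_of_nonneg hl, norm_pow] at a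
    have b := pow_le_pow_left₀ (norm_nonneg w) h2 2
    linarith
  set d := ‖(l : ℂ) - w ^ 2‖
  have h5 : R ^ 2 + 1 ≤ (R ^ 2 + 1) / δ ^ 2 * d := by
    calc R ^ 2 + 1 = (R ^ 2 + 1) / δ ^ 2 * δ ^ 2 := by field_simp
      _ ≤ _ := by gcongr
  linarith

lemma KerBd.ne_zero {h A : ℝ} {ω : ℂ} (H : KerBd h A ω) {l : ℝ} (hl : 0 ≤ l) :
    (l : ℂ) - (ω + I * (h:ℂ)) ^ 2 ≠ 0 := by
  intro e
  have := H l hl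
  rw [e, norm_zero, mul_zero] at this
  linarith

lemma KerBd.norm_inv_le {h A : ℝ} {ω : ℂ} (H : KerBd h A ω) {l : ℝ} (hl : 0 ≤ l) :
    ‖((l : ℂ) - (ω + I * (h:ℂ)) ^ 2)⁻¹‖ ≤ A * (1 / (l + 1)) := by
  have hp : 0 < ‖(l : ℂ) - (ω + I * (h:ℂ)) ^ 2‖ := norm_pos_iff.2 (H.ne_zero hl)
  have := H l hl
  rw [norm_inv, mul_one_div, inv_eq_one_div, div_le_div_iff₀ hp (by linarith)]
  linarith

/-- For `0 < x < h/2` the real part of the kernel `1/(λ - (x+ih)²)` is bounded below by a multiple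
of `1/(λ+1)`: its numerator is `λ + h² - x² ≥ λ + 3h²/4`, and its denominator
`|λ - (x+ih)²|²` is at most `(λ + h² + x²)²`. -/
lemma exists_re_lower (h : ℝ) (hh : 0 < h) : ∃ c : ℝ, 0 < c ∧ c ≤ 1 ∧ ∀ x ∈ Ioo (0:ℝ) (h / 2),
    ∀ l : ℝ, 0 ≤ l → c * (1 / (l + 1)) ≤ (((l : ℂ) - ((x:ℂ) + I * (h:ℂ)) ^ 2)⁻¹).re := by
  set a := min 1 (3 * h ^ 2 / 4) with ha
  set B := 1 + 2 * h ^ 2 with hB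
  have ha0 : 0 < a := by simp only [ha, lt_min_iff]; exact ⟨one_pos, by positivity⟩
  have ha1 : a ≤ 1 := min_le_left _ _
  have ha2 : a ≤ 3 * h ^ 2 / 4 := min_le_right _ _
  have hB1 : 1 ≤ B := by simp only [hB]; nlinarith
  refine ⟨a / B ^ 2, by positivity, ?_, fun x hx l hl => ?_⟩
  · rw [div_le_one (by positivity)]; nlinarith
  have hx2 : x ^ 2 ≤ h ^ 2 / 4 := by nlinarith [hx.1, hx.2]
  set z := (l : ℂ) - ((x:ℂ) + I * (h:ℂ)) ^ 2 with hz
  have hre : z.re = l + h ^ 2 - x ^ 2 := by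
    simp [hz, sq]; ring
  have him : z.im = - (2 * x * h) := by
    simp [hz, sq]; ring
  have hns : normSq z = (l + h ^ 2 - x ^ 2) ^ 2 + (2 * x * h) ^ 2 := by
    rw [normSq_apply, hre, him]; ring
  have h1 : a * (l + 1) ≤ z.re := by rw [hre]; nlinarith
  have hpos : 0 < normSq z := by
    rw [hns]
    have : 0 < l + h ^ 2 - x ^ 2 := by nlinarith
    positivity
  have h2 : normSq z ≤ B ^ 2 * (l + 1) ^ 2 := by
    have e : normSq z = (l + h ^ 2 + x ^ 2) ^ 2 - 4 * l * x ^ 2 := by rw [hns]; ring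
    have : l + h ^ 2 + x ^ 2 ≤ B * (l + 1) := by simp only [hB]; nlinarith [mul_nonneg hl (sq_nonneg h)]
    have h3 := pow_le_pow_left₀ (by positivity) this 2
    have : 0 ≤ 4 * l * x ^ 2 := by positivity
    rw [← mul_pow]; linarith
  rw [inv_re, div_mul_div_comm, mul_one, div_le_div_iff₀ (by positivity) hpos]
  calc a * normSq z ≤ a * (B ^ 2 * (l + 1) ^ 2) := by gcongr
    _ = (a * (l + 1)) * (B ^ 2 * (l + 1)) := by ring
    _ ≤ z.re * (B ^ 2 * (l + 1)) := by gcongr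

/-! ### Members of `S_h` and their mass -/

section mass

variable {h : ℝ} {σ : Measure ℝ}

lemma integrable_weight (hσ : FinCond σ) :
    Integrable (fun l : ℝ => 1 / (l + 1)) (σ.restrict (Ici 0)) := by
  refine ⟨(by fun_prop : Measurable fun l : ℝ => 1 / (l + 1)).aestronglyMeasurable, ?_⟩
  rw [hasFiniteIntegral_iff_norm]
  refine lt_of_eq_of_lt (setLIntegral_congr_fun measurableSet_Ici fun l hl => ?_) hσ
  have : (0:ℝ) ≤ 1 / (l + 1) := by have : (0:ℝ) ≤ l := hl; positivity
  simp only [Real.norm_of_nonneg this]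

lemma ae_nonneg (σ : Measure ℝ) : ∀ᵐ l ∂(σ.restrict (Ici (0:ℝ))), 0 ≤ l :=
  ae_restrict_mem measurableSet_Ici

lemma integrable_kernel (hσ : FinCond σ) {A : ℝ} {ω : ℂ} (H : KerBd h A ω) :
    Integrable (fun l : ℝ => ((l : ℂ) - (ω + I * (h:ℂ)) ^ 2)⁻¹) (σ.restrict (Ici 0)) := by
  refine Integrable.mono' ((integrable_weight hσ).const_mul A) (by fun_prop) ?_
  filter_upwards [ae_nonneg σ] with l hl using H.norm_inv_le hl

lemma norm_sInt_le (hσ : FinCond σ) {A : ℝ} {ω : ℂ} (H : KerBd h A ω) :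
    ‖sInt h σ ω‖ ≤ A * ∫ l in Ici (0:ℝ), 1 / (l + 1) ∂σ := by
  rw [← integral_const_mul]
  refine norm_integral_le_of_norm_le ((integrable_weight hσ).const_mul A) ?_
  filter_upwards [ae_nonneg σ] with l hl using H.norm_inv_le hl

lemma norm_sInt_sub_le (hσ : FinCond σ) {A : ℝ} (hA : 0 < A) {ω ω' : ℂ}
    (H : KerBd h A ω) (H' : KerBd h A ω') :
    ‖sInt h σ ω - sInt h σ ω'‖ ≤ A ^ 2 * ‖(ω + I * (h:ℂ)) ^ 2 - (ω' + I * (h:ℂ)) ^ 2‖ *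
      ∫ l in Ici (0:ℝ), 1 / (l + 1) ∂σ := by
  rw [sInt, sInt, ← integral_sub (integrable_kernel hσ H) (integrable_kernel hσ H'),
    ← integral_const_mul]
  refine norm_integral_le_of_norm_le ((integrable_weight hσ).const_mul _) ?_
  filter_upwards [ae_nonneg σ] with l hl
  have e : ((l : ℂ) - (ω + I * (h:ℂ)) ^ 2)⁻¹ - ((l : ℂ) - (ω' + I * (h:ℂ)) ^ 2)⁻¹ =
      ((ω + I * (h:ℂ)) ^ 2 - (ω' + I * (h:ℂ)) ^ 2) *
      (((l : ℂ) - (ω + I * (h:ℂ)) ^ 2)⁻¹ * ((l : ℂ) - (ω' + I * (h:ℂ)) ^ 2)⁻¹) := by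
    have := H.ne_zero hl
    have := H'.ne_zero hl
    field_simp
    ring
  rw [e, norm_mul, norm_mul]
  have hl1 : 0 ≤ 1 / (l + 1) := by positivity
  have hl2 : 1 / (l + 1) ≤ 1 := by rw [div_le_one (by linarith)]; linarith
  calc _ ≤ ‖(ω + I * (h:ℂ)) ^ 2 - (ω' + I * (h:ℂ)) ^ 2‖ *
        ((A * (1 / (l + 1))) * (A * (1 / (l + 1)))) := by
        gcongr
        · exact H.norm_inv_le hl
        · exact H'.norm_inv_le hl
    _ = A ^ 2 * ‖(ω + I * (h:ℂ)) ^ 2 - (ω' + I * (h:ℂ)) ^ 2‖ *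
        ((1 / (l + 1)) * (1 / (l + 1))) := by ring
    _ ≤ A ^ 2 * ‖(ω + I * (h:ℂ)) ^ 2 - (ω' + I * (h:ℂ)) ^ 2‖ * (1 / (l + 1)) := by
        gcongr
        nlinarith

lemma isOpen_Hh (h : ℝ) : IsOpen (Hh h) := isOpen_lt continuous_const continuous_im

/-- Every point of `ℍ_h` has a compact ball around it on which the kernel bound is uniform. -/
lemma exists_ball_kerBd (h : ℝ) {ω : ℂ} (hω : ω ∈ Hh h) : ∃ r A : ℝ, 0 < r ∧ 0 < A ∧
    ∀ z ∈ Metric.closedBall ω r, KerBd h A z := by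
  obtain ⟨r, hr, hrs⟩ := Metric.nhds_basis_closedBall.mem_iff.1 ((isOpen_Hh h).mem_nhds hω)
  obtain ⟨A, hA, H⟩ := exists_kerBd h (isCompact_closedBall ω r) hrs
  exact ⟨r, A, hr, hA, H⟩

lemma differentiableAt_sInt (hσ : FinCond σ) {ω : ℂ} (hω : ω ∈ Hh h) :
    DifferentiableAt ℂ (sInt h σ) ω := by
  obtain ⟨r, A, hr, hA, H⟩ := exists_ball_kerBd h hω
  obtain ⟨B, hB⟩ := (isCompact_closedBall ω r).exists_bound_of_continuousOn
    (f := fun z : ℂ => 2 * (z + I * (h:ℂ))) (by fun_prop)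
  have hmem : Metric.closedBall ω r ∈ 𝓝 ω := Metric.closedBall_mem_nhds ω hr
  refine (hasDerivAt_integral_of_dominated_loc_of_deriv_le
    (F := fun z (l : ℝ) => ((l : ℂ) - (z + I * (h:ℂ)) ^ 2)⁻¹)
    (F' := fun z (l : ℝ) => 2 * (z + I * (h:ℂ)) *
      (((l : ℂ) - (z + I * (h:ℂ)) ^ 2)⁻¹ * ((l : ℂ) - (z + I * (h:ℂ)) ^ 2)⁻¹))
    (bound := fun l => B * A ^ 2 * (1 / (l + 1)))
    hmem ?_ ?_ ?_ ?_ ((integrable_weight hσ).const_mul _) ?_).2.differentiableAt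
  · exact Eventually.of_forall fun z => by fun_prop
  · exact integrable_kernel hσ (H ω (mem_of_mem_nhds hmem))
  · fun_prop
  · filter_upwards [ae_nonneg σ] with l hl z hz
    have hl1 : 0 ≤ 1 / (l + 1) := by positivity
    have hl2 : 1 / (l + 1) ≤ 1 := by rw [div_le_one (by linarith)]; linarith
    have hB0 : 0 ≤ B := (norm_nonneg _).trans (hB z hz)
    rw [norm_mul, norm_mul (_)⁻¹]
    calc _ ≤ B * ((A * (1 / (l + 1))) * (A * (1 / (l + 1)))) := by
          gcongr
          · exact hB z hz
          · exact (H z hz).norm_inv_le hl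
          · exact (H z hz).norm_inv_le hl
      _ = B * A ^ 2 * ((1 / (l + 1)) * (1 / (l + 1))) := by ring
      _ ≤ B * A ^ 2 * (1 / (l + 1)) := by gcongr; nlinarith
  · filter_upwards [ae_nonneg σ] with l hl z hz
    have hne := (H z hz).ne_zero hl
    have h1 : HasDerivAt (fun z : ℂ => (l : ℂ) - (z + I * (h:ℂ)) ^ 2)
        (-(2 * (z + I * (h:ℂ)))) z := by
      have := (((hasDerivAt_id z).add_const (I * (h:ℂ))).pow 2).const_sub (l : ℂ)
      simpa using this
    refine (h1.fun_inv hne).congr_deriv ?_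
    rw [neg_neg, div_eq_mul_inv, ← mul_inv, ← sq]

end mass

/-- The mass `M = ρ + ‖σ‖_*` of a member `f` of `S_h` is bounded by `Re f` on `(0, h/2)`, and
controls the size and the modulus of continuity of `f` wherever the kernel bound holds. -/
lemma MemS.exists_mass {h c : ℝ} (hh : 0 < h) (hc1 : c ≤ 1)
    (hc : ∀ x ∈ Ioo (0:ℝ) (h / 2), ∀ l : ℝ, 0 ≤ l →
      c * (1 / (l + 1)) ≤ (((l : ℂ) - ((x:ℂ) + I * (h:ℂ)) ^ 2)⁻¹).re)
    {f : ℂ → ℂ} (hf : MemS h f) :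
    ∃ M : ℝ, 0 ≤ M ∧ (∀ x ∈ Ioo (0:ℝ) (h / 2), c * M ≤ (f x).re) ∧
      (∀ A ω, 0 < A → ω ∈ Hh h → KerBd h A ω → ‖f ω‖ ≤ (1 + A) * M) ∧
      (∀ A ω ω', 0 < A → ω ∈ Hh h → ω' ∈ Hh h → KerBd h A ω → KerBd h A ω' →
        ‖f ω - f ω'‖ ≤ A ^ 2 * ‖(ω + I * (h:ℂ)) ^ 2 - (ω' + I * (h:ℂ)) ^ 2‖ * M) := by
  obtain ⟨ρ, σ, hρ, hσ, hfe⟩ := hf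
  have hS : 0 ≤ ∫ l in Ici (0:ℝ), 1 / (l + 1) ∂σ :=
    setIntegral_nonneg measurableSet_Ici fun l hl => by
      have : (0:ℝ) ≤ l := hl
      positivity
  refine ⟨ρ + ∫ l in Ici (0:ℝ), 1 / (l + 1) ∂σ, by positivity, fun x hx => ?_,
    fun A ω hA hω H => ?_, fun A ω ω' hA hω hω' H H' => ?_⟩
  · have hxm : (x : ℂ) ∈ Hh h := by simp [Hh, hh]
    obtain ⟨r, A, hr, hA, H⟩ := exists_ball_kerBd h hxm
    have hi := integrable_kernel hσ (H x (Metric.mem_closedBall_self hr.le))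
    rw [hfe _ hxm, add_re, ofReal_re, mul_add, sInt, ← integral_const_mul]
    have e : (∫ l in Ici (0:ℝ), ((l : ℂ) - ((x:ℂ) + I * (h:ℂ)) ^ 2)⁻¹ ∂σ).re =
        ∫ l in Ici (0:ℝ), (((l : ℂ) - ((x:ℂ) + I * (h:ℂ)) ^ 2)⁻¹).re ∂σ :=
      (integral_re hi).symm
    rw [e]
    refine add_le_add (by nlinarith) (integral_mono_ae ((integrable_weight hσ).const_mul c)
      hi.re ?_)
    filter_upwards [ae_nonneg σ] with l hl using hc x hx l hl
  · rw [hfe _ hω]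
    refine (norm_add_le _ _).trans ?_
    rw [norm_real, Real.norm_of_nonneg hρ]
    have := norm_sInt_le hσ H
    nlinarith
  · rw [hfe _ hω, hfe _ hω', add_sub_add_left_eq_sub]
    refine (norm_sInt_sub_le hσ hA H H').trans ?_
    gcongr
    linarith

lemma MemS.differentiableOn {h : ℝ} {f : ℂ → ℂ} (hf : MemS h f) :
    DifferentiableOn ℂ f (Hh h) := by
  obtain ⟨ρ, σ, hρ, hσ, hfe⟩ := hf
  refine DifferentiableOn.congr (f := fun ω => (ρ : ℂ) + sInt h σ ω) (fun ω hω => ?_) hfe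
  exact ((differentiableAt_sInt hσ hω).const_add _).differentiableWithinAt

/-! ### The `L²(0,1)` norm -/

lemma ofReal_mem_Hh {h : ℝ} (hh : 0 < h) (x : ℝ) : (x : ℂ) ∈ Hh h := by simp [Hh, hh]

lemma integrableOn_sq {h : ℝ} (hh : 0 < h) {g : ℂ → ℂ} (hg : ContinuousOn g (Hh h)) :
    IntegrableOn (fun x : ℝ => ‖g (x:ℂ)‖ ^ 2) (Ioo 0 1) := by
  have h1 : Continuous fun x : ℝ => g (x:ℂ) :=
    hg.comp_continuous continuous_ofReal (ofReal_mem_Hh hh)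
  exact ((h1.norm.pow 2).continuousOn.integrableOn_compact
    (isCompact_Icc (a := (0:ℝ)) (b := 1))).mono_set Ioo_subset_Icc_self

lemma L2norm01_sq (g : ℂ → ℂ) : L2norm01 g ^ 2 = ∫ x in Ioo (0:ℝ) 1, ‖g (x:ℂ)‖ ^ 2 :=
  Real.sq_sqrt (integral_nonneg fun _ => by positivity)

lemma L2norm01_sq_add_le {h : ℝ} (hh : 0 < h) {g k : ℂ → ℂ} (hg : ContinuousOn g (Hh h))
    (hk : ContinuousOn k (Hh h)) :
    L2norm01 (fun ω => g ω + k ω) ^ 2 ≤ 2 * L2norm01 g ^ 2 + 2 * L2norm01 k ^ 2 := by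
  rw [L2norm01_sq, L2norm01_sq, L2norm01_sq, ← integral_const_mul, ← integral_const_mul,
    ← integral_add ((integrableOn_sq hh hg).const_mul 2) ((integrableOn_sq hh hk).const_mul 2)]
  refine integral_mono (integrableOn_sq hh (hg.add hk))
    (((integrableOn_sq hh hg).const_mul 2).add ((integrableOn_sq hh hk).const_mul 2)) fun x => ?_
  have h1 := norm_add_le (g x) (k x)
  have h2 := pow_le_pow_left₀ (norm_nonneg _) h1 2
  show ‖g x + k x‖ ^ 2 ≤ 2 * ‖g x‖ ^ 2 + 2 * ‖k x‖ ^ 2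
  nlinarith [sq_nonneg (‖g x‖ - ‖k x‖)]

lemma L2norm01_sq_le {h : ℝ} (hh : 0 < h) {g : ℂ → ℂ} (hg : ContinuousOn g (Hh h)) {ε : ℝ}
    (hε : ∀ x ∈ Ioo (0:ℝ) 1, ‖g x‖ ≤ ε) : L2norm01 g ^ 2 ≤ ε ^ 2 := by
  rw [L2norm01_sq]
  calc _ ≤ ∫ x in Ioo (0:ℝ) 1, ε ^ 2 :=
        setIntegral_mono_on (integrableOn_sq hh hg) (by simp) measurableSet_Ioo
          fun x hx => pow_le_pow_left₀ (norm_nonneg _) (hε x hx) 2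
    _ = ε ^ 2 := by simp

/-- A continuous function with vanishing `L²(0,1)` norm is zero on `(0,1)`. -/
lemma eq_zero_of_L2norm01 {h : ℝ} (hh : 0 < h) {g : ℂ → ℂ} (hg : ContinuousOn g (Hh h))
    (h0 : L2norm01 g = 0) : ∀ x ∈ Ioo (0:ℝ) 1, g x = 0 := by
  have h1 : Continuous fun x : ℝ => g (x:ℂ) :=
    hg.comp_continuous continuous_ofReal (ofReal_mem_Hh hh)
  have h2 := L2norm01_sq g
  rw [h0, zero_pow two_ne_zero] at h2
  have h3 := (integral_eq_zero_iff_of_nonneg (fun x => by positivity)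
    (integrableOn_sq hh hg)).1 h2.symm
  have h4 : (fun x : ℝ => g (x:ℂ)) =ᵐ[volume.restrict (Ioo (0:ℝ) 1)] fun _ => 0 := by
    filter_upwards [h3] with x hx
    simpa using hx
  exact Measure.eqOn_open_of_ae_eq h4 isOpen_Ioo h1.continuousOn continuousOn_const

/-- The mass is dominated by the `L²(0,1)` norm: `|f| ≥ Re f ≥ c M` on `(0, min 1 (h/2))`. -/
lemma mass_sq_le {h c M : ℝ} (hh : 0 < h) (hc0 : 0 < c) (hM : 0 ≤ M) {f : ℂ → ℂ}
    (hf : ContinuousOn f (Hh h)) (hre : ∀ x ∈ Ioo (0:ℝ) (h / 2), c * M ≤ (f x).re) :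
    min 1 (h / 2) * (c * M) ^ 2 ≤ L2norm01 f ^ 2 := by
  have hm : 0 < min 1 (h / 2) := lt_min one_pos (by linarith)
  rw [L2norm01_sq]
  have hsub : Ioo (0:ℝ) (min 1 (h / 2)) ⊆ Ioo 0 1 := Ioo_subset_Ioo_right (min_le_left _ _)
  calc _ = ∫ x in Ioo (0:ℝ) (min 1 (h / 2)), (c * M) ^ 2 := by
        simp [hm.le]
    _ ≤ ∫ x in Ioo (0:ℝ) (min 1 (h / 2)), ‖f x‖ ^ 2 := by
        refine setIntegral_mono_on (integrableOn_const (by simp)) ((integrableOn_sq hh hf).mono_set hsub)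
          measurableSet_Ioo fun x hx => pow_le_pow_left₀ (by positivity) ?_ 2
        exact (hre x ⟨hx.1, hx.2.trans_le (min_le_right _ _)⟩).trans (re_le_norm _)
    _ ≤ _ := setIntegral_mono_set (integrableOn_sq hh hf)
        (Eventually.of_forall fun x => by positivity) hsub.eventuallyLE

/-! ### Convergence -/

/-- On a compact set, pointwise convergence of an equicontinuous family is uniform. -/
lemma tendstoUniformlyOn_of_equicontinuousOn {F : ℕ → ℂ → ℂ} {G : ℂ → ℂ} {l : Filter ℕ}
    {K : Set ℂ} (hK : IsCompact K) (hF : EquicontinuousOn F K)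
    (hp : ∀ z ∈ K, Tendsto (fun n => F n z) l (𝓝 (G z))) : TendstoUniformlyOn F G l K := by
  have := (EquicontinuousOn.tendsto_uniformOnFun_iff_pi' (𝔖 := {K}) (by simpa using hK)
    (by simpa using hF) l G).2 (by
      rw [tendsto_pi_nhds]
      rintro ⟨z, hz⟩
      exact hp z (by simpa using hz))
  exact (UniformOnFun.tendsto_iff_tendstoUniformlyOn.1 this) K rfl

/-- If `F n → f` in `L²(0,1)` then the masses `M n` are bounded. -/
lemma exists_mass_bound {h c : ℝ} (hh : 0 < h) (hc0 : 0 < c) {f : ℂ → ℂ} {F : ℕ → ℂ → ℂ}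
    (hF : ∀ n, ContinuousOn (F n) (Hh h)) (hf : ContinuousOn f (Hh h)) {M : ℕ → ℝ}
    (hM : ∀ n, 0 ≤ M n) (hre : ∀ n, ∀ x ∈ Ioo (0:ℝ) (h / 2), c * M n ≤ (F n x).re)
    (hL2 : Tendsto (fun n => L2norm01 (fun ω => F n ω - f ω)) atTop (nhds 0)) :
    ∃ C, ∀ n, M n ≤ C := by
  obtain ⟨B, hB⟩ := (hL2.pow 2).bddAbove_range
  have hm : 0 < min 1 (h / 2) := lt_min one_pos (by linarith)
  set T := 2 * B + 2 * L2norm01 f ^ 2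
  refine ⟨1 + T / (min 1 (h / 2) * c ^ 2), fun n => ?_⟩
  have h1 := mass_sq_le hh hc0 (hM n) (hF n) (hre n)
  have h2 := L2norm01_sq_add_le hh (g := fun ω => F n ω - f ω) ((hF n).sub hf) hf
  simp only [sub_add_cancel] at h2
  have h3 : L2norm01 (fun ω => F n ω - f ω) ^ 2 ≤ B := hB ⟨n, rfl⟩
  have h4 : min 1 (h / 2) * c ^ 2 * M n ^ 2 ≤ T := by
    calc _ = min 1 (h / 2) * (c * M n) ^ 2 := by ring
      _ ≤ L2norm01 (F n) ^ 2 := h1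
      _ ≤ 2 * L2norm01 (fun ω => F n ω - f ω) ^ 2 + 2 * L2norm01 f ^ 2 := h2
      _ ≤ T := by simp only [T]; linarith
  have h5 : M n ^ 2 ≤ T / (min 1 (h / 2) * c ^ 2) := by
    rw [le_div_iff₀ (by positivity)]; linarith
  nlinarith [sq_nonneg (M n - 1)]

/-- Stability of analytic continuation on `S_h`: if `f_n, f ∈ S_h` and
`f_n → f` in `L²(0,1)`, then `f_n → f` uniformly on every compact subset of `ℍ_h`. -/
theorem stability_of_analytic_continuation (h : ℝ) (hh : 0 < h)
    (f : ℂ → ℂ) (F : ℕ → ℂ → ℂ) (hF : ∀ n, MemS h (F n)) (hf : MemS h f)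
    (hL2 : Tendsto (fun n => L2norm01 (fun ω => F n ω - f ω)) atTop (nhds 0)) :
    ∀ K ⊆ Hh h, IsCompact K → TendstoUniformlyOn F f atTop K := by
  obtain ⟨c, hc0, hc1, hc⟩ := exists_re_lower h hh
  choose M hM hre hbd hlip using fun n => (hF n).exists_mass hh hc1 hc
  have hFc := fun n => (hF n).differentiableOn.continuousOn
  have hfc := hf.differentiableOn.continuousOn
  obtain ⟨C, hC⟩ := exists_mass_bound hh hc0 hFc hfc hM hre hL2
  have heq : ∀ ω ∈ Hh h, EquicontinuousAt F ω := by
    intro ω hω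
    obtain ⟨r, A, hr, hA, H⟩ := exists_ball_kerBd h hω
    refine Metric.equicontinuousAt_of_continuity_modulus
      (fun z => A ^ 2 * ‖(ω + I * (h:ℂ)) ^ 2 - (z + I * (h:ℂ)) ^ 2‖ * C) ?_ F ?_
    · have : Continuous fun z : ℂ =>
          A ^ 2 * ‖(ω + I * (h:ℂ)) ^ 2 - (z + I * (h:ℂ)) ^ 2‖ * C := by fun_prop
      simpa using this.tendsto ω
    · filter_upwards [Metric.closedBall_mem_nhds ω hr, (isOpen_Hh h).mem_nhds hω] with z hz hz' n
      rw [dist_eq_norm]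
      refine (hlip n A ω z hA hω hz' (H _ (Metric.mem_closedBall_self hr.le)) (H z hz)).trans ?_
      gcongr
      exact hC n
  have heqK : ∀ K ⊆ Hh h, EquicontinuousOn F K := fun K hKs ω hω =>
    (heq ω (hKs hω)).equicontinuousWithinAt K
  intro K hKs hK
  refine tendstoUniformlyOn_of_equicontinuousOn hK (heqK K hKs) fun ω₀ hω₀ => ?_
  rw [tendsto_iff_ultrafilter]
  intro U hU
  -- The pointwise limit of `F n` along the ultrafilter `U`.
  have hlim : ∀ ω, ∃ y, ω ∈ Hh h → Tendsto (fun n => F n ω) U (𝓝 y) := by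
    intro ω
    by_cases hω : ω ∈ Hh h
    · obtain ⟨r, A, hr, hA, H⟩ := exists_ball_kerBd h hω
      obtain ⟨y, -, hy⟩ := (isCompact_closedBall (0:ℂ) ((1 + A) * C)).ultrafilter_le_nhds
        (U.map fun n => F n ω) (by
          rw [le_principal_iff]
          refine Filter.univ_mem' (f := (U : Filter ℕ)) fun n => ?_
          rw [mem_preimage, mem_closedBall_zero_iff]
          refine (hbd n A ω hA hω (H _ (Metric.mem_closedBall_self hr.le))).trans ?_
          gcongr
          exact hC n)
      exact ⟨y, fun _ => hy⟩
    · exact ⟨0, fun h' => absurd h' hω⟩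
  choose G hG using hlim
  have hunif : ∀ K ⊆ Hh h, IsCompact K → TendstoUniformlyOn F G U K := fun K hKs hK =>
    tendstoUniformlyOn_of_equicontinuousOn hK (heqK K hKs) fun z hz => hG z (hKs hz)
  have hGd : DifferentiableOn ℂ G (Hh h) := by
    refine TendstoLocallyUniformlyOn.differentiableOn (F := F) (φ := U) ?_
      (Eventually.of_forall fun n => (hF n).differentiableOn) (isOpen_Hh h)
    exact (tendstoLocallyUniformlyOn_iff_forall_isCompact (isOpen_Hh h)).2 hunif
  have hGc := hGd.continuousOn
  have hL0 : L2norm01 (fun ω => G ω - f ω) = 0 := by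
    have hle : ∀ ε > 0, L2norm01 (fun ω => G ω - f ω) ^ 2 ≤ 4 * ε ^ 2 := by
      intro ε hε
      have hI : IsCompact ((fun x : ℝ => (x : ℂ)) '' Icc 0 1) :=
        isCompact_Icc.image continuous_ofReal
      have h1 := Metric.tendstoUniformlyOn_iff.1
        (hunif _ (by rintro _ ⟨x, -, rfl⟩; exact ofReal_mem_Hh hh x) hI) ε hε
      have h2 := hU (hL2.eventually (gt_mem_nhds hε))
      obtain ⟨n, hn1, hn2⟩ := (h1.and h2).exists
      have h3 := L2norm01_sq_add_le hh (g := fun ω => G ω - F n ω)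
        (k := fun ω => F n ω - f ω) (hGc.sub (hFc n)) ((hFc n).sub hfc)
      simp only [sub_add_sub_cancel] at h3
      have h4 := L2norm01_sq_le hh (hGc.sub (hFc n)) (ε := ε) fun x hx => by
        have := hn1 x ⟨x, Ioo_subset_Icc_self hx, rfl⟩
        rw [dist_eq_norm] at this
        exact this.le
      have h5 : L2norm01 (fun ω => F n ω - f ω) ^ 2 ≤ ε ^ 2 :=
        pow_le_pow_left₀ (Real.sqrt_nonneg _) (le_of_lt hn2) 2
      have h3' : L2norm01 (fun ω => G ω - f ω) ^ 2 ≤ 2 * ε ^ 2 + 2 * ε ^ 2 :=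
        h3.trans (add_le_add (mul_le_mul_of_nonneg_left h4 two_pos.le)
          (mul_le_mul_of_nonneg_left h5 two_pos.le))
      linarith
    by_contra hne
    have hpos : 0 < L2norm01 (fun ω => G ω - f ω) :=
      lt_of_le_of_ne (Real.sqrt_nonneg _) (Ne.symm hne)
    have := hle (L2norm01 (fun ω => G ω - f ω) / 3) (by positivity)
    nlinarith [sq_nonneg (L2norm01 (fun ω => G ω - f ω)), pow_pos hpos 2]
  have hzero := eq_zero_of_L2norm01 hh (hGc.sub hfc) hL0
  have hGf : EqOn G f (Hh h) := by
    have hconv : Convex ℝ (Hh h) := convex_halfSpace_im_gt (-h)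
    refine (hGd.analyticOnNhd (isOpen_Hh h)).eqOn_of_preconnected_of_frequently_eq
      (hf.differentiableOn.analyticOnNhd (isOpen_Hh h)) hconv.isPreconnected
      (ofReal_mem_Hh hh (1 / 2)) ?_
    -- Real points of `(0,1)` accumulate at `1/2`.
    have ht : Tendsto (fun x : ℝ => (x : ℂ)) (𝓝[≠] (1 / 2 : ℝ)) (𝓝[≠] ((1 / 2 : ℝ) : ℂ)) := by
      refine tendsto_nhdsWithin_iff.2
        ⟨continuous_ofReal.continuousAt.tendsto.mono_left nhdsWithin_le_nhds, ?_⟩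
      filter_upwards [self_mem_nhdsWithin] with x hx
      simpa only [mem_compl_iff, mem_singleton_iff, ofReal_inj] using hx
    refine ht.frequently (Eventually.frequently ?_)
    have : Ioo (0:ℝ) 1 ∈ 𝓝[≠] (1 / 2 : ℝ) :=
      mem_nhdsWithin_of_mem_nhds (Ioo_mem_nhds (by norm_num) (by norm_num))
    filter_upwards [this] with x hx using sub_eq_zero.1 (hzero x hx)
  rw [← hGf (hKs hω₀)]
  exact hG ω₀ (hKs hω₀)
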